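/- arXiv:1411.5577 — 2 statements merged into one kernel-verified Lean document; each statement's English description precedes it below -/
import Mathlib

section
/- Let m ≥ 2, let x ∈ ℝ^m, let v ∈ ℝ^m, and let W ⊆ ℝ^m be an open set containing x. Then there exists a smooth vector field X : ℝ^m → ℝ^m with compact support contained in W, such that div X = 0 everywhere (the trace of the Fréchet derivative of X vanishes identically), and X equals the constant vector v on some open neighborhood of x. -/
/-!
Choose a continuous linear functional `L` and a vector `w` with `L v = 0` and `L w = 1`; this is
where dimension at least two enters. For any `C²` function `g`, the field `∂_w g • v - ∂_v g • w`
has divergence `∂_v ∂_w g - ∂_w ∂_v g = 0`, and it equals `v` wherever `g` agrees locally with `L`.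
Cutting `L` off outside a neighbourhood of `x` thus localizes the constant field `v` without
creating divergence: the cutoff is applied to the potential, not to the field.
-/

open Module
open scoped ContDiff Topology

theorem exists_dual_apply_eq_zero_apply_eq_one {K V : Type*} [Field K] [AddCommGroup V]
    [Module K V] (hV : 1 < Module.rank K V) (v : V) :
    ∃ (f : Dual K V) (w : V), f v = 0 ∧ f w = 1 := by
  have hspan : Submodule.span K {v} < ⊤ := by
    refine lt_top_iff_ne_top.2 fun htop => hV.not_ge ?_
    rw [← rank_top, ← htop]
    exact rank_span_le {v} |>.trans_eq (Cardinal.mk_singleton v)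
  obtain ⟨f, hf, hfv⟩ := Submodule.exists_le_ker_of_lt_top _ hspan
  obtain ⟨w, hw⟩ := LinearMap.surjective hf 1
  exact ⟨f, w, hfv (Submodule.mem_span_singleton_self v), hw⟩

theorem exists_contDiff_hasCompactSupport_eventuallyEq {E F : Type*}
    [NormedAddCommGroup E] [NormedSpace ℝ E] [FiniteDimensional ℝ E]
    [NormedAddCommGroup F] [NormedSpace ℝ F] {n : ℕ∞} {f : E → F} (hf : ContDiff ℝ n f)
    {x : E} {W : Set E} (hW : W ∈ 𝓝 x) :
    ∃ g : E → F, ContDiff ℝ n g ∧ HasCompactSupport g ∧ tsupport g ⊆ W ∧ g =ᶠ[𝓝 x] f := by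
  obtain ⟨r, hr, hrW⟩ := Metric.nhds_basis_closedBall.mem_iff.1 hW
  let φ : ContDiffBump x := ⟨r / 2, r, half_pos hr, half_lt_self hr⟩
  refine ⟨fun y => φ y • f y, φ.contDiff.smul hf, φ.hasCompactSupport.smul_right, ?_, ?_⟩
  · exact (tsupport_smul_subset_left φ f).trans (φ.tsupport_eq.trans_subset hrW)
  · filter_upwards [φ.eventuallyEq_one] with y hy
    simp only [hy, Pi.one_apply, one_smul]

section SkewGradient

variable {𝕜 E : Type*} [NontriviallyNormedField 𝕜] [NormedAddCommGroup E] [NormedSpace 𝕜 E]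

variable (𝕜) in
/-- The vector field `∂_w g • v - ∂_v g • w` with potential `g`, that is, the contraction of the
bivector `v ∧ w` with `dg`. For an orthonormal basis `v`, `w` of a Euclidean plane it is the
gradient of `g` turned by a right angle. -/
noncomputable def skewGradient (v w : E) (g : E → 𝕜) (y : E) : E :=
  fderiv 𝕜 g y w • v - fderiv 𝕜 g y v • w

variable {v w : E} {g : E → 𝕜}

theorem contDiff_skewGradient {m n : WithTop ℕ∞} (hg : ContDiff 𝕜 n g) (hmn : m + 1 ≤ n) :
    ContDiff 𝕜 m (skewGradient 𝕜 v w g) := by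
  have hdg : ContDiff 𝕜 m (fderiv 𝕜 g) := hg.fderiv_right hmn
  exact ((hdg.clm_apply contDiff_const).smul contDiff_const).sub
    ((hdg.clm_apply contDiff_const).smul contDiff_const)

theorem tsupport_skewGradient_subset : tsupport (skewGradient 𝕜 v w g) ⊆ tsupport g := by
  have hsupp : Function.support (skewGradient 𝕜 v w g) ⊆ Function.support (fderiv 𝕜 g) :=
    fun y hy hdg => hy (by simp [skewGradient, hdg])
  exact (closure_mono hsupp).trans (tsupport_fderiv_subset 𝕜)

theorem hasFDerivAt_skewGradient {y : E} (hg : DifferentiableAt 𝕜 (fderiv 𝕜 g) y) :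
    HasFDerivAt (skewGradient 𝕜 v w g)
      (((fderiv 𝕜 (fderiv 𝕜 g) y).flip w).smulRight v -
        ((fderiv 𝕜 (fderiv 𝕜 g) y).flip v).smulRight w) y := by
  have hpartial (u : E) :
      HasFDerivAt (fun z => fderiv 𝕜 g z u) ((fderiv 𝕜 (fderiv 𝕜 g) y).flip u) y := by
    simpa using hg.hasFDerivAt.clm_apply (hasFDerivAt_const u y)
  exact ((hpartial w).smul_const v).sub ((hpartial v).smul_const w)

theorem trace_fderiv_skewGradient [FiniteDimensional 𝕜 E] {y : E}
    (hg : DifferentiableAt 𝕜 (fderiv 𝕜 g) y) (hsymm : IsSymmSndFDerivAt 𝕜 g y) :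
    LinearMap.trace 𝕜 E (fderiv 𝕜 (skewGradient 𝕜 v w g) y).toLinearMap = 0 := by
  have htrace (f : E →L[𝕜] 𝕜) (u : E) :
      LinearMap.trace 𝕜 E (f.smulRight u).toLinearMap = f u :=
    LinearMap.trace_smulRight f.toLinearMap u
  rw [(hasFDerivAt_skewGradient hg).fderiv, ContinuousLinearMap.toLinearMap_sub, map_sub, htrace,
    htrace, ContinuousLinearMap.flip_apply, ContinuousLinearMap.flip_apply, hsymm.eq v w, sub_self]

theorem skewGradient_eventuallyEq_const {L : E →L[𝕜] 𝕜} (hLv : L v = 0) (hLw : L w = 1) {x : E}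
    (hgL : g =ᶠ[𝓝 x] L) : skewGradient 𝕜 v w g =ᶠ[𝓝 x] fun _ => v := by
  filter_upwards [hgL.fderiv (𝕜 := 𝕜)] with y hy
  simp [skewGradient, hy, hLv, hLw]

end SkewGradient

theorem exists_divergence_free_field_locally_constant_general {E : Type*}
    [NormedAddCommGroup E] [NormedSpace ℝ E] (hE : 1 < finrank ℝ E) (v : E) {x : E} {W : Set E}
    (hW : W ∈ 𝓝 x) :
    ∃ X : E → E, ContDiff ℝ ∞ X ∧ HasCompactSupport X ∧ tsupport X ⊆ W ∧
      (∀ y, LinearMap.trace ℝ E (fderiv ℝ X y).toLinearMap = 0) ∧ X =ᶠ[𝓝 x] fun _ => v := by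
  have : FiniteDimensional ℝ E := finite_of_finrank_pos (zero_lt_one.trans hE)
  obtain ⟨f, w, hfv, hfw⟩ :=
    exists_dual_apply_eq_zero_apply_eq_one (one_lt_rank_of_one_lt_finrank hE) v
  let L : E →L[ℝ] ℝ := LinearMap.toContinuousLinearMap f
  obtain ⟨g, hg, hgc, hgW, hgL⟩ :=
    exists_contDiff_hasCompactSupport_eventuallyEq (n := ⊤) L.contDiff hW
  have hdg : Differentiable ℝ (fderiv ℝ g) :=
    (contDiff_infty_iff_fderiv.1 hg).2.differentiable (by simp)
  have hsymm (y : E) : IsSymmSndFDerivAt ℝ g y :=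
    (contDiff_infty.1 hg 2).contDiffAt.isSymmSndFDerivAt (by simp)
  have hsupp : tsupport (skewGradient ℝ v w g) ⊆ tsupport g := tsupport_skewGradient_subset
  exact ⟨skewGradient ℝ v w g, contDiff_skewGradient hg le_rfl,
    hgc.of_isClosed_subset (isClosed_tsupport _) hsupp, hsupp.trans hgW,
    fun y => trace_fderiv_skewGradient (hdg y) (hsymm y),
    skewGradient_eventuallyEq_const (L := L) hfv hfw hgL⟩

/-- For `m ≥ 2`, any tangent vector `v` at a point `x` of an open set `W ⊆ ℝ^m`
can be realized locally by a smooth divergence-free vector field compactly supported in `W`. -/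
theorem exists_divergence_free_field_locally_constant
    (m : ℕ) (hm : 2 ≤ m)
    (x v : EuclideanSpace ℝ (Fin m))
    (W : Set (EuclideanSpace ℝ (Fin m))) (hW : IsOpen W) (hxW : x ∈ W) :
    ∃ X : EuclideanSpace ℝ (Fin m) → EuclideanSpace ℝ (Fin m),
      ContDiff ℝ (⊤ : ℕ∞) X ∧ HasCompactSupport X ∧ tsupport X ⊆ W ∧
      (∀ y, LinearMap.trace ℝ (EuclideanSpace ℝ (Fin m)) (fderiv ℝ X y).toLinearMap = 0) ∧
      ∃ U : Set (EuclideanSpace ℝ (Fin m)), IsOpen U ∧ x ∈ U ∧ ∀ y ∈ U, X y = v := by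
  obtain ⟨X, hX, hXc, hXW, hdiv, hXv⟩ := exists_divergence_free_field_locally_constant_general
    (by rwa [finrank_euclideanSpace_fin]) v (hW.mem_nhds hxW)
  obtain ⟨U, hUX, hU, hxU⟩ := eventually_nhds_iff.1 hXv
  exact ⟨X, hX, hXc, hXW, hdiv, U, hU, hxU, hUX⟩
end

section
/- Let m ≥ 2, let U ⊆ ℝ^m be an open connected set, and let f : U → ℝ be smooth on U. Suppose that for every smooth divergence-free vector field X : ℝ^m → ℝ^m with compact support contained in U, the directional derivative of f along X vanishes on U, i.e. ⟨X(x), ∇f(x)⟩ = 0 for all x ∈ U. Then f is constant on U. -/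
/-!
A stream function `ψ` and two vectors `a`, `b` give the field `X = (∂_b ψ) a - (∂_a ψ) b`, whose
divergence `∂_a ∂_b ψ - ∂_b ∂_a ψ` vanishes by the symmetry of second derivatives. In dimension at
least two, every vector `v` is killed by some linear functional `l` with `l b = 1` for some `b`.
Cutting `l` off near a point `x` and taking the result as stream function for `v` and `b` gives a
compactly supported divergence-free field with `X x = v`. Hence a function annihilated by all such
fields has zero derivative.
-/

open Module Topology

section StreamField

variable {𝕜 E : Type*} [NontriviallyNormedField 𝕜] [NormedAddCommGroup E] [NormedSpace 𝕜 E]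

variable (𝕜) in
/-- The divergence of a vector field `X` at `y`, as the trace of its Fréchet derivative. It has the
junk value `0` where `X` is not differentiable or when `E` is infinite-dimensional. -/
noncomputable def divergence (X : E → E) (y : E) : 𝕜 :=
  LinearMap.trace 𝕜 E (fderiv 𝕜 X y).toLinearMap

theorem divergence_fun_sub {X Y : E → E} {y : E}
    (hX : DifferentiableAt 𝕜 X y) (hY : DifferentiableAt 𝕜 Y y) :
    divergence 𝕜 (fun z ↦ X z - Y z) y = divergence 𝕜 X y - divergence 𝕜 Y y := by
  rw [divergence, fderiv_fun_sub hX hY, ContinuousLinearMap.toLinearMap_sub, map_sub]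
  rfl

theorem divergence_smul_const [FiniteDimensional 𝕜 E] {φ : E → 𝕜} {y : E}
    (hφ : DifferentiableAt 𝕜 φ y) (v : E) :
    divergence 𝕜 (fun z ↦ φ z • v) y = fderiv 𝕜 φ y v := by
  rw [divergence, fderiv_smul_const hφ]
  exact LinearMap.trace_smulRight (fderiv 𝕜 φ y).toLinearMap v

variable (𝕜) in
/-- The vector field generated by the stream function `ψ` in the directions `a` and `b`: the
derivative of `ψ` contracted with the bivector `a ∧ b`, which in the plane is the usual rotated
gradient. -/
noncomputable def streamField (ψ : E → 𝕜) (a b : E) : E → E :=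
  fun z ↦ fderiv 𝕜 ψ z b • a - fderiv 𝕜 ψ z a • b

variable {ψ : E → 𝕜}

theorem contDiff_streamField {m n : WithTop ℕ∞} (hψ : ContDiff 𝕜 n ψ) (hmn : m + 1 ≤ n)
    (a b : E) : ContDiff 𝕜 m (streamField 𝕜 ψ a b) := by
  have hterm (v w : E) : ContDiff 𝕜 m fun z ↦ fderiv 𝕜 ψ z v • w :=
    ((hψ.fderiv_right hmn).clm_apply contDiff_const).smul contDiff_const
  exact (hterm b a).sub (hterm a b)

theorem tsupport_streamField_subset (ψ : E → 𝕜) (a b : E) :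
    tsupport (streamField 𝕜 ψ a b) ⊆ tsupport ψ :=
  (tsupport_comp_subset (g := fun l : E →L[𝕜] 𝕜 ↦ l b • a - l a • b) (by simp) _).trans
    (tsupport_fderiv_subset 𝕜)

theorem divergence_streamField [FiniteDimensional 𝕜 E] {n : WithTop ℕ∞} {y : E}
    (hψ : ContDiffAt 𝕜 n ψ y) (hn : minSmoothness 𝕜 2 ≤ n) (a b : E) :
    divergence 𝕜 (streamField 𝕜 ψ a b) y = 0 := by
  have hψ' : DifferentiableAt 𝕜 (fderiv 𝕜 ψ) y :=
    (hψ.fderiv_right (m := 1) (le_minSmoothness.trans hn)).differentiableAt one_ne_zero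
  have hpartial (v : E) : DifferentiableAt 𝕜 (fun z ↦ fderiv 𝕜 ψ z v) y := by fun_prop
  have hsecond (v w : E) :
      fderiv 𝕜 (fun z ↦ fderiv 𝕜 ψ z v) y w = fderiv 𝕜 (fderiv 𝕜 ψ) y w v := by
    simp [fderiv_clm_apply hψ' (differentiableAt_const v)]
  calc
    divergence 𝕜 (streamField 𝕜 ψ a b) y
      = fderiv 𝕜 (fun z ↦ fderiv 𝕜 ψ z b) y a - fderiv 𝕜 (fun z ↦ fderiv 𝕜 ψ z a) y b := by
        unfold streamField
        rw [divergence_fun_sub ((hpartial b).smul_const a) ((hpartial a).smul_const b),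
          divergence_smul_const (hpartial b), divergence_smul_const (hpartial a)]
    _ = fderiv 𝕜 (fderiv 𝕜 ψ) y a b - fderiv 𝕜 (fderiv 𝕜 ψ) y b a := by
        rw [hsecond, hsecond]
    _ = 0 := sub_eq_zero.mpr (hψ.isSymmSndFDerivAt hn a b)

end StreamField

theorem exists_dual_apply_eq_zero_and_apply_eq_one {K V : Type*} [Field K] [AddCommGroup V]
    [Module K V] (hV : 1 < finrank K V) (v : V) :
    ∃ (l : Dual K V) (w : V), l v = 0 ∧ l w = 1 := by
  have hspan : Submodule.span K {v} < ⊤ := span_lt_top_of_card_lt_finrank (by simpa using hV)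
  obtain ⟨l, hl, hker⟩ := Submodule.exists_le_ker_of_lt_top _ hspan
  obtain ⟨w, hw⟩ := LinearMap.surjective hl 1
  exact ⟨l, w, hker (Submodule.mem_span_singleton_self v), hw⟩

section CompactSupport

variable {E F : Type*} [NormedAddCommGroup E] [NormedSpace ℝ E] [FiniteDimensional ℝ E]
  [NormedAddCommGroup F] [NormedSpace ℝ F]

theorem exists_contDiff_tsupport_subset_fderiv_eq {s : Set E} {x : E} {n : ℕ∞} (hs : s ∈ 𝓝 x)
    (l : E →L[ℝ] F) :
    ∃ ψ : E → F, tsupport ψ ⊆ s ∧ HasCompactSupport ψ ∧ ContDiff ℝ n ψ ∧ fderiv ℝ ψ x = l := by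
  obtain ⟨χ, hχs, hχc, hχ, -, hχx⟩ := exists_contDiff_tsupport_subset (n := n + 1) hs
  refine ⟨fun y ↦ χ y • (l y - l x), (tsupport_smul_subset_left χ _).trans hχs,
    hχc.smul_right, (hχ.of_le (by simp)).smul (l.contDiff.sub contDiff_const), ?_⟩
  have hχ' : HasFDerivAt χ (fderiv ℝ χ x) x :=
    (hχ.differentiable (by simp) x).hasFDerivAt
  simpa [hχx] using (hχ'.fun_smul (l.hasFDerivAt.sub_const (l x))).fderiv

theorem exists_contDiff_tsupport_subset_divergence_eq_zero_apply_eq (hE : 1 < finrank ℝ E)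
    {s : Set E} {x : E} (hs : s ∈ 𝓝 x) (v : E) :
    ∃ X : E → E, tsupport X ⊆ s ∧ HasCompactSupport X ∧ ContDiff ℝ (⊤ : ℕ∞) X ∧
      (∀ y, divergence ℝ X y = 0) ∧ X x = v := by
  obtain ⟨l, w, hlv, hlw⟩ := exists_dual_apply_eq_zero_and_apply_eq_one hE v
  obtain ⟨ψ, hψs, hψc, hψ, hψx⟩ :=
    exists_contDiff_tsupport_subset_fderiv_eq (n := ⊤) hs l.toContinuousLinearMap
  have hsupp : tsupport (streamField ℝ ψ v w) ⊆ tsupport ψ := tsupport_streamField_subset ψ v w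
  refine ⟨streamField ℝ ψ v w, hsupp.trans hψs,
    hψc.of_isClosed_subset (isClosed_tsupport _) hsupp, contDiff_streamField hψ (by simp) v w,
    fun _ ↦ divergence_streamField (contDiff_infty.mp hψ 2).contDiffAt (by simp) v w, ?_⟩
  simp [streamField, hψx, hlv, hlw]

theorem constant_of_deriv_along_divergence_free_fields_eq_zero_general (hE : 1 < finrank ℝ E)
    {U : Set E} (hU : IsOpen U) (hUconn : IsPreconnected U)
    {f : E → F} (hf : DifferentiableOn ℝ f U)
    (hinv : ∀ X : E → E, ContDiff ℝ (⊤ : ℕ∞) X → HasCompactSupport X → tsupport X ⊆ U →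
      (∀ y, divergence ℝ X y = 0) → ∀ x ∈ U, fderiv ℝ f x (X x) = 0) :
    ∀ x ∈ U, ∀ y ∈ U, f x = f y := by
  have hderiv : U.EqOn (fderiv ℝ f) 0 := by
    intro x hx
    ext v
    obtain ⟨X, hXU, hXc, hX, hdiv, rfl⟩ :=
      exists_contDiff_tsupport_subset_divergence_eq_zero_apply_eq hE (hU.mem_nhds hx) v
    exact hinv X hX hXc hXU hdiv x hx
  exact fun x hx y hy ↦ hU.is_const_of_fderiv_eq_zero hUconn hf hderiv hx hy

end CompactSupport

/-- For `m ≥ 2` and `U ⊆ ℝ^m` open and connected, a function smooth on `U`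
whose directional derivative along every smooth divergence-free vector field compactly
supported in `U` vanishes on `U` is constant on `U`. -/
theorem constant_of_deriv_along_divergence_free_fields_eq_zero
    (m : ℕ) (hm : 2 ≤ m)
    (U : Set (EuclideanSpace ℝ (Fin m))) (hU : IsOpen U) (hUconn : IsConnected U)
    (f : EuclideanSpace ℝ (Fin m) → ℝ) (hf : ContDiffOn ℝ (⊤ : ℕ∞) f U)
    (hinv : ∀ X : EuclideanSpace ℝ (Fin m) → EuclideanSpace ℝ (Fin m),
      ContDiff ℝ (⊤ : ℕ∞) X → HasCompactSupport X → tsupport X ⊆ U →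
      (∀ y, LinearMap.trace ℝ (EuclideanSpace ℝ (Fin m)) (fderiv ℝ X y).toLinearMap = 0) →
      ∀ x ∈ U, fderiv ℝ f x (X x) = 0) :
    ∀ x ∈ U, ∀ y ∈ U, f x = f y := by
  exact constant_of_deriv_along_divergence_free_fields_eq_zero_general
    (by rwa [finrank_euclideanSpace_fin]) hU hUconn.isPreconnected
    (hf.differentiableOn (by simp)) hinv
end
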